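/- Let k be a field, let Q be a connected finite acyclic quiver which is non-Dynkin, let Π(Q) be its preprojective algebra with the grading by path length, and let C be the adjacency matrix of the double quiver of Q. Then the matrix-valued Hilbert series h_Π(t) = Σ_{n≥0} [Π(Q)_n] t^n satisfies h_Π(t)·(1 − C t + t²·1) = 1 in the ring of r×r matrices over k[[t]]; equivalently, (1 − Ct + t²) is invertible there and h_Π(t) = 1/(1 − Ct + t²). This holds in arbitrary characteristic. -/

import Mathlib

/-!
STATEMENT 0: Hilbert series of the preprojective algebra of a connected finite
acyclic non-Dynkin quiver: `h_Π(t) · (1 - C t + t² · 1) = 1` over `k[[t]]`.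

A finite quiver is encoded by a vertex count `r`, a finite arrow type and
source/target maps.  The preprojective algebra is presented as the quotient of
the free algebra on generators `e_i` (trivial paths), `α` (original arrows) and
`α*` (reversed arrows) by the path-algebra relations together with the mesh
relations.  The grading is by path length (vertices have weight 0, arrows of
the double quiver weight 1); the degree-`n` piece is the span of the images of
the weight-`n` monomials, and `e_i Π_n e_j` is its image under
`x ↦ e_i * x * e_j`.
-/

/-- A finite quiver. -/
structure FinQuiver where
  r : ℕ
  Arrow : Type
  [instFintypeArrow : Fintype Arrow]
  src : Arrow → Fin r
  tgt : Arrow → Fin r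

attribute [instance] FinQuiver.instFintypeArrow

namespace FinQuiver

variable (Q : FinQuiver)

/-- The underlying graph of `Q` is connected. -/
def Connected : Prop :=
  ∀ i j : Fin Q.r, Relation.ReflTransGen
    (fun a b => ∃ e : Q.Arrow, (Q.src e = a ∧ Q.tgt e = b) ∨ (Q.src e = b ∧ Q.tgt e = a)) i j

/-- `Q` has no oriented cycles. -/
def Acyclic : Prop :=
  ∀ i : Fin Q.r, ¬ Relation.TransGen (fun a b => ∃ e : Q.Arrow, Q.src e = a ∧ Q.tgt e = b) i i

/-- The Tits quadratic form of `Q` on `ℝ^{Q₀}`. -/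
def titsForm (x : Fin Q.r → ℝ) : ℝ :=
  (∑ i, x i ^ 2) - ∑ e : Q.Arrow, x (Q.src e) * x (Q.tgt e)

/-- `Q` is Dynkin iff its Tits form is positive definite. -/
def IsDynkin : Prop := ∀ x : Fin Q.r → ℝ, x ≠ 0 → 0 < Q.titsForm x

/-- Adjacency matrix of `Q`: the `(i,j)` entry counts arrows `i → j`. -/
def adjMatrix : Matrix (Fin Q.r) (Fin Q.r) ℕ := Matrix.of fun i j =>
  Fintype.card {e : Q.Arrow // Q.src e = i ∧ Q.tgt e = j}

/-- Adjacency matrix `C` of the double quiver `Q̄`. -/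
def doubleAdj : Matrix (Fin Q.r) (Fin Q.r) ℕ := Matrix.of fun i j =>
  Q.adjMatrix i j + Q.adjMatrix j i

end FinQuiver

/-- Generators for the path algebra of the double quiver: trivial paths,
original arrows, reversed arrows. -/
inductive PPGen (Q : FinQuiver) : Type
  | vert : Fin Q.r → PPGen Q
  | fwd : Q.Arrow → PPGen Q
  | bwd : Q.Arrow → PPGen Q

/-- The mesh element `ρ_i = ∑_{src α = i} α α* - ∑_{tgt α = i} α* α`
in the free algebra.  (An arrow `α` runs from `src α` to `tgt α`, and paths
compose left-to-right, so `e_i ρ_i e_i = ρ_i`.) -/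
noncomputable def meshElem (k : Type) [Field k] (Q : FinQuiver) (i : Fin Q.r) :
    FreeAlgebra k (PPGen Q) :=
  (∑ e : Q.Arrow, if Q.src e = i then
      FreeAlgebra.ι k (PPGen.fwd e) * FreeAlgebra.ι k (PPGen.bwd e) else 0)
  - ∑ e : Q.Arrow, if Q.tgt e = i then
      FreeAlgebra.ι k (PPGen.bwd e) * FreeAlgebra.ι k (PPGen.fwd e) else 0

/-- Defining relations of the preprojective algebra: the `e_i` are orthogonal
idempotents summing to `1`, arrows are composable according to souce and target,
and all mesh relations `ρ_i = 0` hold. -/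
inductive PPRel (k : Type) [Field k] (Q : FinQuiver) :
    FreeAlgebra k (PPGen Q) → FreeAlgebra k (PPGen Q) → Prop
  | vert_idem (i : Fin Q.r) :
      PPRel k Q (FreeAlgebra.ι k (PPGen.vert i) * FreeAlgebra.ι k (PPGen.vert i))
        (FreeAlgebra.ι k (PPGen.vert i))
  | vert_orth (i j : Fin Q.r) (h : i ≠ j) :
      PPRel k Q (FreeAlgebra.ι k (PPGen.vert i) * FreeAlgebra.ι k (PPGen.vert j)) 0
  | vert_sum : PPRel k Q (∑ i : Fin Q.r, FreeAlgebra.ι k (PPGen.vert i)) 1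
  | fwd_left (e : Q.Arrow) :
      PPRel k Q (FreeAlgebra.ι k (PPGen.vert (Q.src e)) * FreeAlgebra.ι k (PPGen.fwd e))
        (FreeAlgebra.ι k (PPGen.fwd e))
  | fwd_right (e : Q.Arrow) :
      PPRel k Q (FreeAlgebra.ι k (PPGen.fwd e) * FreeAlgebra.ι k (PPGen.vert (Q.tgt e)))
        (FreeAlgebra.ι k (PPGen.fwd e))
  | bwd_left (e : Q.Arrow) :
      PPRel k Q (FreeAlgebra.ι k (PPGen.vert (Q.tgt e)) * FreeAlgebra.ι k (PPGen.bwd e))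
        (FreeAlgebra.ι k (PPGen.bwd e))
  | bwd_right (e : Q.Arrow) :
      PPRel k Q (FreeAlgebra.ι k (PPGen.bwd e) * FreeAlgebra.ι k (PPGen.vert (Q.src e)))
        (FreeAlgebra.ι k (PPGen.bwd e))
  | mesh (i : Fin Q.r) : PPRel k Q (meshElem k Q i) 0

/-- The preprojective algebra `Π(Q)`. -/
abbrev PreprojAlg (k : Type) [Field k] (Q : FinQuiver) : Type :=
  RingQuot (PPRel k Q)

/-- The image in `Π(Q)` of a generator. -/
noncomputable def ppGen (k : Type) [Field k] (Q : FinQuiver) (g : PPGen Q) :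
    PreprojAlg k Q :=
  RingQuot.mkAlgHom k (PPRel k Q) (FreeAlgebra.ι k g)

/-- The idempotent `e_i ∈ Π(Q)`. -/
noncomputable def ppIdem (k : Type) [Field k] (Q : FinQuiver) (i : Fin Q.r) :
    PreprojAlg k Q :=
  ppGen k Q (PPGen.vert i)

/-- Path-length weight of a generator. -/
def ppWt (Q : FinQuiver) : PPGen Q → ℕ
  | .vert _ => 0
  | .fwd _ => 1
  | .bwd _ => 1

/-- The degree-`n` component `Π(Q)_n`: span of images of weight-`n` monomials. -/
noncomputable def ppPiece (k : Type) [Field k] (Q : FinQuiver) (n : ℕ) :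
    Submodule k (PreprojAlg k Q) :=
  Submodule.span k
    {x | ∃ l : List (PPGen Q), (l.map (ppWt Q)).sum = n ∧ x = (l.map (ppGen k Q)).prod}

/-- The subspace `e_i Π(Q)_n e_j`. -/
noncomputable def ppCorner (k : Type) [Field k] (Q : FinQuiver) (n : ℕ) (i j : Fin Q.r) :
    Submodule k (PreprojAlg k Q) :=
  (ppPiece k Q n).map
    ((LinearMap.mulLeft k (ppIdem k Q i)).comp (LinearMap.mulRight k (ppIdem k Q j)))

/-- The matrix-valued Hilbert series `h_Π(t) = ∑_n [Π(Q)_n] tⁿ` over `k[[t]]`. -/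
noncomputable def ppHilb (k : Type) [Field k] (Q : FinQuiver) :
    Matrix (Fin Q.r) (Fin Q.r) (PowerSeries k) :=
  Matrix.of fun i j => PowerSeries.mk fun n => (Module.finrank k (ppCorner k Q n i j) : k)

namespace FinQuiver

variable (Q : FinQuiver)

/-- Arrows of the double quiver. -/
abbrev DArrow : Type := Q.Arrow ⊕ Q.Arrow

variable {Q}

/-- The source of an arrow of the double quiver. -/
def dsrc : Q.DArrow → Fin Q.r := Sum.elim Q.src Q.tgt

/-- The target of an arrow of the double quiver. -/
def dtgt : Q.DArrow → Fin Q.r := Sum.elim Q.tgt Q.src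

/-- The generator attached to an arrow of the double quiver. -/
def dgen : Q.DArrow → PPGen Q := Sum.elim PPGen.fwd PPGen.bwd

/-- The sign with which `b * b.swap` enters the mesh relation. -/
def dsign (k : Type) [Field k] : Q.DArrow → k := Sum.elim (fun _ => 1) (fun _ => -1)

@[simp] lemma dsrc_swap (b : Q.DArrow) : dsrc b.swap = dtgt b := by cases b <;> rfl

@[simp] lemma dtgt_swap (b : Q.DArrow) : dtgt b.swap = dsrc b := by cases b <;> rfl

@[simp] lemma ppWt_dgen (b : Q.DArrow) : ppWt Q (dgen b) = 1 := by cases b <;> rfl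

lemma dsign_ne_zero (k : Type) [Field k] (b : Q.DArrow) : dsign k b ≠ 0 := by
  cases b <;> simp [dsign]

end FinQuiver

namespace FinQuiver

variable {Q : FinQuiver}

lemma sum_dtgt_eq {M : Type*} [AddCommMonoid M] (j : Fin Q.r) (f : Q.DArrow → M)
    (h : ∀ b, dtgt b ≠ j → f b = 0) : ∑ b : {b : Q.DArrow // dtgt b = j}, f b = ∑ b, f b := by
  classical
  rw [← Finset.sum_subtype (Finset.univ.filter fun b : Q.DArrow => dtgt b = j) (by simp) f]
  exact Finset.sum_filter_of_ne fun b _ hb => by_contra fun hne => hb (h b hne)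

lemma doubleAdj_comm (i j : Fin Q.r) : Q.doubleAdj i j = Q.doubleAdj j i :=
  Nat.add_comm _ _

lemma sum_dsrc_eq_sum_doubleAdj {R : Type*} [CommSemiring R] (f : Fin Q.r → R) (j : Fin Q.r) :
    ∑ b : {b : Q.DArrow // dtgt b = j}, f (dsrc b.1) = ∑ l, f l * (Q.doubleAdj l j : R) := by
  have h1 : ∑ b : {b : Q.DArrow // dtgt b = j}, f (dsrc b.1) =
      ∑ b : Q.DArrow, if dtgt b = j then f (dsrc b) else 0 := by
    rw [← sum_dtgt_eq j _ fun b hb => if_neg hb]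
    exact Finset.sum_congr rfl fun b _ => (if_pos b.2).symm
  have h2 : ∀ l, f l * (Q.doubleAdj l j : R) =
      (∑ e : Q.Arrow, if Q.src e = l then (if Q.tgt e = j then f l else 0) else 0) +
      ∑ e : Q.Arrow, if Q.tgt e = l then (if Q.src e = j then f l else 0) else 0 := by
    intro l
    simp only [doubleAdj, adjMatrix, Matrix.of_apply, Nat.cast_add, mul_add, Fintype.card_subtype,
      Finset.card_filter, Nat.cast_sum, Finset.mul_sum, Nat.cast_ite, Nat.cast_one, Nat.cast_zero,
      mul_ite, mul_one, mul_zero, ite_and]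
    congr 1
    exact Finset.sum_congr rfl fun e _ => by split_ifs <;> rfl
  rw [h1, Fintype.sum_sum_type, Finset.sum_congr rfl fun l _ => h2 l, Finset.sum_add_distrib,
    Finset.sum_comm, Finset.sum_comm (s := Finset.univ (α := Fin Q.r))]
  simp only [Finset.sum_ite_eq, Finset.mem_univ, if_true]
  rfl

lemma sum_mul_doubleAdj_mul (x : Fin Q.r → ℝ) :
    ∑ j, (∑ l, x l * (Q.doubleAdj l j : ℝ)) * x j = 2 * ∑ e, x (Q.src e) * x (Q.tgt e) := by
  have h : ∀ j, (∑ l, x l * (Q.doubleAdj l j : ℝ)) * x j =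
      ∑ b : Q.DArrow, if dtgt b = j then x (dsrc b) * x j else 0 := by
    intro j
    rw [← sum_dsrc_eq_sum_doubleAdj, Finset.sum_mul, ← sum_dtgt_eq j _ fun b hb => if_neg hb]
    exact Finset.sum_congr rfl fun b _ => (if_pos b.2).symm
  rw [Finset.sum_congr rfl fun j _ => h j, Finset.sum_comm]
  simp only [Finset.sum_ite_eq, Finset.mem_univ, if_true]
  rw [Fintype.sum_sum_type, two_mul]
  congr 1
  exact Finset.sum_congr rfl fun e _ => mul_comm _ _

/-- The quadratic form of the adjacency matrix attains its maximum on the unit sphere at a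
nonnegative vector. -/
lemma exists_nonneg_isMax (hr : 0 < Q.r) : ∃ u : Fin Q.r → ℝ, (∀ i, 0 ≤ u i) ∧ ∑ i, u i ^ 2 = 1 ∧
    ∀ y : Fin Q.r → ℝ, ∑ e, y (Q.src e) * y (Q.tgt e) ≤
      (∑ e, u (Q.src e) * u (Q.tgt e)) * ∑ i, y i ^ 2 := by
  have hK : IsCompact (Set.Icc (0 : Fin Q.r → ℝ) 1 ∩ {x | ∑ i, x i ^ 2 = 1}) :=
    isCompact_Icc.inter_right (isClosed_eq (by fun_prop) continuous_const)
  obtain ⟨u, ⟨hu, hu1⟩, hmax⟩ := hK.exists_isMaxOn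
    (f := fun x : Fin Q.r → ℝ => ∑ e, x (Q.src e) * x (Q.tgt e))
    ⟨Pi.single ⟨0, hr⟩ 1, ⟨Pi.single_nonneg.2 zero_le_one, fun i => by
      by_cases h : i = ⟨0, hr⟩
      · subst h; simp
      · simp [Pi.single_eq_of_ne h]⟩, by simp [Pi.single_apply]⟩ (by fun_prop)
  refine ⟨u, hu.1, hu1, fun y => ?_⟩
  have hN0 : 0 ≤ ∑ i, y i ^ 2 := Finset.sum_nonneg fun i _ => sq_nonneg _
  obtain hN | hN := hN0.eq_or_lt
  · have hy : ∀ i, y i = 0 := fun i => by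
      have := (Finset.sum_eq_zero_iff_of_nonneg fun i _ => sq_nonneg (y i)).1 hN.symm i
        (Finset.mem_univ i)
      exact pow_eq_zero_iff two_ne_zero |>.1 this
    simp [hy]
  set N := ∑ i, y i ^ 2 with hNdef
  have hs : 0 < √N := Real.sqrt_pos.2 hN
  have hsq : √N * √N = N := Real.mul_self_sqrt hN0
  have hz : (fun i => |y i| / √N) ∈ Set.Icc (0 : Fin Q.r → ℝ) 1 ∩ {x | ∑ i, x i ^ 2 = 1} := by
    refine ⟨⟨fun i => by positivity, fun i => ?_⟩, ?_⟩
    · refine (div_le_one hs).2 (Real.abs_le_sqrt ?_)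
      exact Finset.single_le_sum (f := fun i => y i ^ 2) (fun i _ => sq_nonneg _)
        (Finset.mem_univ i)
    · simp only [Set.mem_ofPred_eq, div_pow, sq_abs, ← Finset.sum_div]
      rw [sq, hsq, div_self hN.ne']
  have hle := hmax hz
  simp only [Set.mem_ofPred_eq, div_mul_div_comm, hsq, ← Finset.sum_div] at hle
  rw [div_le_iff₀ hN] at hle
  refine le_trans (Finset.sum_le_sum fun e _ => ?_) hle
  rw [← abs_mul]
  exact le_abs_self _

/-- A connected non-Dynkin quiver has a positive vector subadditive for its Cartan matrix. -/
theorem exists_pos_two_mul_le (hr : 0 < Q.r) (hconn : Q.Connected) (hnd : ¬ Q.IsDynkin) :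
    ∃ v : Fin Q.r → ℝ, (∀ i, 0 < v i) ∧ ∀ i, 2 * v i ≤ ∑ l, (Q.doubleAdj i l : ℝ) * v l := by
  obtain ⟨u, hu0, hu1, hmax⟩ := exists_nonneg_isMax hr
  set μ := ∑ e, u (Q.src e) * u (Q.tgt e) with hμ
  obtain ⟨x, hx0, hx⟩ : ∃ x : Fin Q.r → ℝ, x ≠ 0 ∧ Q.titsForm x ≤ 0 := by
    simpa [IsDynkin] using hnd
  have hN : 0 < ∑ i, x i ^ 2 := by
    obtain ⟨i, hi⟩ := Function.ne_iff.1 hx0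
    exact Finset.sum_pos' (fun i _ => sq_nonneg _) ⟨i, Finset.mem_univ i, sq_pos_of_ne_zero hi⟩
  have hμ1 : 1 ≤ μ := by
    by_contra! h
    have h1 := hmax x
    rw [titsForm] at hx
    nlinarith
  let M : Matrix (Fin Q.r) (Fin Q.r) ℝ :=
    Matrix.of fun i l => (if i = l then 2 * μ else 0) - (Q.doubleAdj i l : ℝ)
  have hmul : ∀ y i, M.mulVec y i = 2 * μ * y i - ∑ l, (Q.doubleAdj i l : ℝ) * y l := by
    intro y i
    simp [M, Matrix.mulVec, dotProduct, sub_mul, Finset.sum_sub_distrib, ite_mul]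
  have hform : ∀ y : Fin Q.r → ℝ, dotProduct y (M.mulVec y) =
      2 * (μ * ∑ i, y i ^ 2 - ∑ e, y (Q.src e) * y (Q.tgt e)) := by
    intro y
    rw [mul_sub, ← sum_mul_doubleAdj_mul, dotProduct]
    simp only [hmul, mul_sub, Finset.sum_sub_distrib, Finset.mul_sum]
    congr 1
    · exact Finset.sum_congr rfl fun i _ => by ring
    · refine Finset.sum_congr rfl fun i _ => ?_
      rw [Finset.sum_mul]
      exact Finset.sum_congr rfl fun l _ => by rw [doubleAdj_comm i l]; ring
  have hpsd : M.PosSemidef := by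
    refine Matrix.PosSemidef.of_dotProduct_mulVec_nonneg ?_ fun y => ?_
    · ext i l
      simp only [M, Matrix.conjTranspose_apply, Matrix.of_apply, star_trivial, doubleAdj_comm i l,
        eq_comm]
    · rw [star_trivial, hform]
      linarith [hmax y]
  have hker : M.mulVec u = 0 := by
    rw [← hpsd.dotProduct_mulVec_zero_iff, star_trivial, hform, hu1, ← hμ]
    ring
  have heig : ∀ i, ∑ l, (Q.doubleAdj i l : ℝ) * u l = 2 * μ * u i := fun i => by
    have := congrFun hker i
    rw [hmul, Pi.zero_apply] at this
    linarith
  refine ⟨u, fun i => (hu0 i).lt_of_ne fun hi => ?_, fun i => ?_⟩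
  · have hall : ∀ j, u j = 0 := by
      intro j
      induction hconn i j with
      | refl => exact hi.symm
      | @tail a b _ hab ih =>
        have hsum := heig a
        rw [ih, mul_zero, Finset.sum_eq_zero_iff_of_nonneg
          fun l _ => mul_nonneg (Nat.cast_nonneg _) (hu0 l)] at hsum
        refine (mul_eq_zero.1 (hsum b (Finset.mem_univ b))).resolve_left (Nat.cast_ne_zero.2 ?_)
        obtain ⟨e, he | he⟩ := hab
        · have : 0 < Q.adjMatrix a b := Fintype.card_pos_iff.2 ⟨⟨e, he⟩⟩
          simp only [doubleAdj, Matrix.of_apply]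
          omega
        · have : 0 < Q.adjMatrix b a := Fintype.card_pos_iff.2 ⟨⟨e, he⟩⟩
          simp only [doubleAdj, Matrix.of_apply]
          omega
    simp [hall] at hu1
  · rw [heig]
    nlinarith [hu0 i]

end FinQuiver

namespace Preproj

open FinQuiver

variable {k : Type} [Field k] {Q : FinQuiver}

lemma map_meshElem {B : Type*} [Ring B] [Algebra k B] (F : FreeAlgebra k (PPGen Q) →ₐ[k] B)
    (i : Fin Q.r) :
    F (meshElem k Q i) = ∑ b : Q.DArrow, if dsrc b = i then
      dsign k b • (F (FreeAlgebra.ι k (dgen b)) * F (FreeAlgebra.ι k (dgen b.swap))) else 0 := by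
  rw [meshElem, map_sub, map_sum, map_sum, Fintype.sum_sum_type, sub_eq_add_neg,
    ← Finset.sum_neg_distrib]
  congr 1
  · refine Finset.sum_congr rfl fun e _ => ?_
    by_cases h : Q.src e = i <;> simp [dsrc, dsign, dgen, h]
  · refine Finset.sum_congr rfl fun e _ => ?_
    by_cases h : Q.tgt e = i <;> simp [dsrc, dsign, dgen, h]

/-- The universal property of the preprojective algebra. -/
theorem exists_lift {B : Type*} [Ring B] [Algebra k B] (f : PPGen Q → B)
    (hidem : ∀ i, f (.vert i) * f (.vert i) = f (.vert i))
    (horth : ∀ i j, i ≠ j → f (.vert i) * f (.vert j) = 0)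
    (hsum : ∑ i, f (.vert i) = 1)
    (hleft : ∀ b : Q.DArrow, f (.vert (dsrc b)) * f (dgen b) = f (dgen b))
    (hright : ∀ b : Q.DArrow, f (dgen b) * f (.vert (dtgt b)) = f (dgen b))
    (hmesh : ∀ i, (∑ b : Q.DArrow, if dsrc b = i then
      dsign k b • (f (dgen b) * f (dgen b.swap)) else 0) = 0) :
    ∃ F : PreprojAlg k Q →ₐ[k] B, ∀ g, F (ppGen k Q g) = f g := by
  have key : ∀ ⦃x y⦄, PPRel k Q x y → FreeAlgebra.lift k f x = FreeAlgebra.lift k f y := by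
    intro x y h
    cases h with
    | vert_idem i => simpa using hidem i
    | vert_orth i j h => simpa using horth i j h
    | vert_sum => simpa using hsum
    | fwd_left e => simpa [dsrc, dgen] using hleft (Sum.inl e)
    | fwd_right e => simpa [dtgt, dgen] using hright (Sum.inl e)
    | bwd_left e => simpa [dsrc, dgen] using hleft (Sum.inr e)
    | bwd_right e => simpa [dtgt, dgen] using hright (Sum.inr e)
    | mesh i => simpa [map_meshElem] using hmesh i
  exact ⟨RingQuot.liftAlgHom k ⟨FreeAlgebra.lift k f, key⟩, fun g => by
    simp [ppGen, RingQuot.liftAlgHom_mkAlgHom_apply]⟩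

section Relations

variable (k)

/-- The image in `Π(Q)` of an arrow of the double quiver. -/
noncomputable def arr (b : Q.DArrow) : PreprojAlg k Q := ppGen k Q (dgen b)

lemma idem_mul_self (i : Fin Q.r) : ppIdem k Q i * ppIdem k Q i = ppIdem k Q i := by
  simpa [ppIdem, ppGen] using RingQuot.mkAlgHom_rel k (PPRel.vert_idem (k := k) (Q := Q) i)

lemma idem_mul_of_ne {i j : Fin Q.r} (h : i ≠ j) : ppIdem k Q i * ppIdem k Q j = 0 := by
  simpa [ppIdem, ppGen] using RingQuot.mkAlgHom_rel k (PPRel.vert_orth (k := k) (Q := Q) i j h)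

lemma sum_idem : ∑ i, ppIdem k Q i = 1 := by
  simpa [ppIdem, ppGen] using RingQuot.mkAlgHom_rel k (PPRel.vert_sum (k := k) (Q := Q))

lemma idem_mul_arr (b : Q.DArrow) : ppIdem k Q (dsrc b) * arr k b = arr k b := by
  cases b with
  | inl e =>
    simpa [ppIdem, ppGen, arr, dgen, dsrc] using
      RingQuot.mkAlgHom_rel k (PPRel.fwd_left (k := k) (Q := Q) e)
  | inr e =>
    simpa [ppIdem, ppGen, arr, dgen, dsrc] using
      RingQuot.mkAlgHom_rel k (PPRel.bwd_left (k := k) (Q := Q) e)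

lemma arr_mul_idem (b : Q.DArrow) : arr k b * ppIdem k Q (dtgt b) = arr k b := by
  cases b with
  | inl e =>
    simpa [ppIdem, ppGen, arr, dgen, dtgt] using
      RingQuot.mkAlgHom_rel k (PPRel.fwd_right (k := k) (Q := Q) e)
  | inr e =>
    simpa [ppIdem, ppGen, arr, dgen, dtgt] using
      RingQuot.mkAlgHom_rel k (PPRel.bwd_right (k := k) (Q := Q) e)

lemma idem_mul_arr_of_ne {b : Q.DArrow} {i : Fin Q.r} (h : dsrc b ≠ i) :
    ppIdem k Q i * arr k b = 0 := by
  rw [← idem_mul_arr, ← mul_assoc, idem_mul_of_ne k h.symm, zero_mul]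

lemma arr_mul_idem_of_ne {b : Q.DArrow} {i : Fin Q.r} (h : dtgt b ≠ i) :
    arr k b * ppIdem k Q i = 0 := by
  rw [← arr_mul_idem, mul_assoc, idem_mul_of_ne k h, mul_zero]

lemma mesh_eq_zero (i : Fin Q.r) :
    (∑ b : Q.DArrow, if dsrc b = i then dsign k b • (arr k b * arr k b.swap) else 0) = 0 := by
  have := RingQuot.mkAlgHom_rel k (PPRel.mesh (k := k) (Q := Q) i)
  rwa [map_meshElem, map_zero] at this

lemma sum_mesh_eq_zero : ∑ b : Q.DArrow, dsign k b • (arr k b * arr k b.swap) = 0 := by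
  have h := Finset.sum_eq_zero fun i (_ : i ∈ Finset.univ) => mesh_eq_zero (Q := Q) k i
  rw [Finset.sum_comm] at h
  simpa using h

end Relations

/-- A subspace containing `1` and stable under left multiplication by generators is everything. -/
lemma eq_top_of_left_stable (N : Submodule k (PreprojAlg k Q)) (h1 : 1 ∈ N)
    (hmul : ∀ g, ∀ x ∈ N, ppGen k Q g * x ∈ N) : N = ⊤ := by
  have key : ∀ z : FreeAlgebra k (PPGen Q), ∀ x ∈ N,
      RingQuot.mkAlgHom k (PPRel k Q) z * x ∈ N := by
    intro z
    induction z using FreeAlgebra.induction with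
    | grade0 c =>
      intro x hx
      rw [AlgHom.commutes, ← Algebra.smul_def]
      exact N.smul_mem c hx
    | grade1 g => exact hmul g
    | mul a b ha hb =>
      intro x hx
      rw [map_mul, mul_assoc]
      exact ha _ (hb _ hx)
    | add a b ha hb =>
      intro x hx
      rw [map_add, add_mul]
      exact N.add_mem (ha _ hx) (hb _ hx)
  refine eq_top_iff.2 fun x _ => ?_
  obtain ⟨z, rfl⟩ := RingQuot.mkAlgHom_surjective k (PPRel k Q) x
  simpa using key z 1 h1

/-- Every element is a combination of trivial paths plus a sum of left multiples of arrows. -/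
lemma exists_eq_sum (x : PreprojAlg k Q) :
    ∃ (c : Fin Q.r → k) (z : Q.DArrow → PreprojAlg k Q),
      x = ∑ i, c i • ppIdem k Q i + ∑ b, z b * arr k b := by
  classical
  let F : (Fin Q.r → k) × (Q.DArrow → PreprojAlg k Q) →ₗ[k] PreprojAlg k Q :=
    (∑ i, ((LinearMap.toSpanSingleton k _ (ppIdem k Q i)).comp (LinearMap.proj i))).coprod
      (∑ b, (LinearMap.mulRight k (arr k b)).comp (LinearMap.proj b))
  have hF : ∀ c z, F (c, z) = ∑ i, c i • ppIdem k Q i + ∑ b, z b * arr k b := by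
    intro c z; simp [F]
  have htop : LinearMap.range F = ⊤ := by
    apply eq_top_of_left_stable
    · exact ⟨(1, 0), by simp [hF, sum_idem]⟩
    · rintro g _ ⟨⟨c, z⟩, rfl⟩
      rw [hF, mul_add, Finset.mul_sum, Finset.mul_sum]
      refine Submodule.add_mem _ (Submodule.sum_mem _ fun i _ => ?_)
        (Submodule.sum_mem _ fun b _ => ?_)
      · rw [mul_smul_comm]
        refine Submodule.smul_mem _ _ ?_
        have harr : ∀ b : Q.DArrow, arr k b * ppIdem k Q i ∈ LinearMap.range F := by
          intro b
          by_cases h : dtgt b = i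
          · subst h
            refine ⟨(0, Pi.single b 1), ?_⟩
            rw [hF, arr_mul_idem]
            simp [Pi.single_apply, ite_mul]
          · rw [arr_mul_idem_of_ne k h]
            exact Submodule.zero_mem _
        cases g with
        | vert l =>
          by_cases h : l = i
          · subst h
            refine ⟨(Pi.single l 1, 0), ?_⟩
            rw [hF]
            change _ = ppIdem k Q l * ppIdem k Q l
            rw [idem_mul_self]
            simp [Pi.single_apply, ite_smul]
          · change ppIdem k Q l * ppIdem k Q i ∈ _
            rw [idem_mul_of_ne k h]
            exact Submodule.zero_mem _
        | fwd e => exact harr (Sum.inl e)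
        | bwd e => exact harr (Sum.inr e)
      · refine ⟨(0, Pi.single b (ppGen k Q g * z b)), ?_⟩
        rw [hF]
        simp [Pi.single_apply, ite_mul, mul_assoc]
  obtain ⟨⟨c, z⟩, h⟩ : x ∈ LinearMap.range F := htop ▸ Submodule.mem_top
  exact ⟨c, z, by rw [← h, hF]⟩


section Exactness

variable {A : Type*} [Ring A] [Algebra k A]

open Classical in
/-- The representation of `Π(Q)` encoding noncommutative Fox derivatives with respect to
the arrows, taken modulo the derivatives of the mesh relations. -/
lemma exists_fox_rep (π : PreprojAlg k Q →ₐ[k] A) (R : Submodule A (Q.DArrow → A))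
    (hR : R = Submodule.span A {fun b => dsign k b.swap • π (arr k b.swap)}) :
    ∃ F : PreprojAlg k Q →ₐ[k] Module.End k (((Q.DArrow → A) ⧸ R) × (Fin Q.r → k)),
      (∀ x z, F x (z, 0) = (π x • z, 0)) ∧
      (∀ i s, F (ppIdem k Q i) (0, s) = (0, Pi.single i (s i))) ∧
      (∀ b s, F (arr k b) (0, s) =
        (s (dtgt b) • R.mkQ (Pi.single b (π (ppIdem k Q (dsrc b)))), 0)) := by
  let u : Q.DArrow → (Q.DArrow → A) ⧸ R := fun b =>
    R.mkQ (Pi.single b (π (ppIdem k Q (dsrc b))))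
  let fv : Fin Q.r → Module.End k (((Q.DArrow → A) ⧸ R) × (Fin Q.r → k)) := fun i =>
    (Algebra.lsmul k k _ (π (ppIdem k Q i))).prodMap
      ((LinearMap.single k (fun _ => k) i).comp (LinearMap.proj i))
  let fb : Q.DArrow → Module.End k (((Q.DArrow → A) ⧸ R) × (Fin Q.r → k)) := fun b =>
    ((Algebra.lsmul k k _ (π (arr k b))).coprod
      ((LinearMap.toSpanSingleton k _ (u b)).comp (LinearMap.proj (dtgt b)))).prod 0
  have hfv : ∀ i z s, fv i (z, s) = (π (ppIdem k Q i) • z, Pi.single i (s i)) :=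
    fun i z s => rfl
  have hfb : ∀ b z s, fb b (z, s) = (π (arr k b) • z + s (dtgt b) • u b, 0) :=
    fun b z s => rfl
  let f : PPGen Q → Module.End k (((Q.DArrow → A) ⧸ R) × (Fin Q.r → k)) := fun g =>
    match g with
    | .vert i => fv i
    | .fwd e => fb (Sum.inl e)
    | .bwd e => fb (Sum.inr e)
  have hf : ∀ b, f (dgen b) = fb b := by rintro (e | e) <;> rfl
  have hfi : ∀ i, f (.vert i) = fv i := fun _ => rfl
  have hu : ∀ b, π (ppIdem k Q (dsrc b)) • u b = u b := by
    intro b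
    simp only [u]
    rw [← map_smul, ← Pi.single_smul, smul_eq_mul, ← map_mul, idem_mul_self]
  obtain ⟨F, hF⟩ := exists_lift (k := k) f
    (by
      intro i
      refine LinearMap.ext fun ⟨z, s⟩ => ?_
      rw [hfi, Module.End.mul_apply, hfv, hfv, smul_smul, ← map_mul, idem_mul_self]
      simp)
    (by
      intro i j h
      refine LinearMap.ext fun ⟨z, s⟩ => ?_
      rw [hfi, hfi, Module.End.mul_apply, hfv, hfv, smul_smul, ← map_mul,
        idem_mul_of_ne k h]
      simp [h])
    (by
      refine LinearMap.ext fun ⟨z, s⟩ => ?_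
      rw [LinearMap.sum_apply]
      simp only [hfi, hfv]
      refine Prod.ext ?_ ?_
      · rw [Prod.fst_sum, ← Finset.sum_smul, ← map_sum, sum_idem, map_one, one_smul]
        rfl
      · rw [Prod.snd_sum]
        exact Finset.univ_sum_single s)
    (by
      intro b
      refine LinearMap.ext fun ⟨z, s⟩ => ?_
      rw [hfi, hf, Module.End.mul_apply, hfb, hfv, smul_add, smul_smul, ← map_mul,
        idem_mul_arr, smul_comm, hu]
      simp)
    (by
      intro b
      refine LinearMap.ext fun ⟨z, s⟩ => ?_
      rw [hfi, hf, Module.End.mul_apply, hfv, hfb, hfb, smul_smul, ← map_mul,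
        arr_mul_idem, Pi.single_eq_same])
    (by
      intro i
      refine LinearMap.ext fun ⟨z, s⟩ => ?_
      have h0 : (∑ b : Q.DArrow, if dsrc b = i then
          dsign k b • (π (arr k b) • u b.swap) else 0) = 0 := by
        have : (∑ b : Q.DArrow, if dsrc b = i then
              dsign k b • (π (arr k b) • u b.swap) else 0) =
            R.mkQ (π (ppIdem k Q i) • fun b => dsign k b.swap • π (arr k b.swap)) := by
          have h1 : ∀ b : Q.DArrow,
              (if dsrc b = i then dsign k b • (π (arr k b) • u b.swap) else 0) =
              R.mkQ (Pi.single b.swap (π (ppIdem k Q i) • dsign k b • π (arr k b))) := by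
            intro b
            split_ifs with h
            · subst h
              simp only [u]
              rw [dsrc_swap, ← map_smul, ← Pi.single_smul, smul_eq_mul, ← map_mul,
                arr_mul_idem, ← LinearMap.map_smul_of_tower, ← Pi.single_smul, smul_comm,
                smul_eq_mul, ← map_mul, idem_mul_arr]
            · rw [smul_comm, smul_eq_mul, ← map_mul, idem_mul_arr_of_ne k h]
              simp
          rw [Finset.sum_congr rfl fun b _ => h1 b, ← map_sum]
          congr 1
          rw [← Finset.univ_sum_single
            (π (ppIdem k Q i) • fun b : Q.DArrow => dsign k b.swap • π (arr k b.swap))]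
          exact Fintype.sum_equiv (Equiv.sumComm _ _) _ _ fun b => by simp
        rw [this, Submodule.mkQ_apply, Submodule.Quotient.mk_eq_zero]
        exact R.smul_mem _ (hR ▸ Submodule.mem_span_singleton_self _)
      have h2 : ∀ b : Q.DArrow, (if dsrc b = i then dsign k b • (f (dgen b) * f (dgen b.swap))
          else 0) (z, s) =
          (π (if dsrc b = i then dsign k b • (arr k b * arr k b.swap) else 0) • z +
            s i • (if dsrc b = i then dsign k b • (π (arr k b) • u b.swap) else 0), 0) := by
        intro b
        split_ifs with h
        · subst h
          rw [hf, hf, LinearMap.smul_apply, Module.End.mul_apply, hfb, hfb, dtgt_swap,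
            smul_add, smul_smul, Prod.smul_mk, smul_add, map_smul, smul_assoc, map_mul,
            smul_comm (π (arr k b)) (s _)]
          simp [smul_comm (dsign k b) (s _)]
        · simp
          rfl
      rw [LinearMap.sum_apply, Finset.sum_congr rfl fun b _ => h2 b]
      refine Prod.ext ?_ ?_
      · rw [Prod.fst_sum, Finset.sum_add_distrib, ← Finset.sum_smul, ← Finset.smul_sum,
          ← map_sum, mesh_eq_zero, h0]
        simp
      · simp [Prod.snd_sum])
  have hFb : ∀ b, F (arr k b) = fb b := fun b => (hF _).trans (hf b)
  have hFi : ∀ i, F (ppIdem k Q i) = fv i := fun i => hF _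
  refine ⟨F, ?_, fun i s => ?_, fun b s => ?_⟩
  · let N : Submodule k (PreprojAlg k Q) :=
      { carrier := {x | ∀ z, F x (z, 0) = (π x • z, 0)}
        add_mem' := fun {a b} ha hb z => by
          rw [map_add, LinearMap.add_apply, ha, hb, map_add, add_smul]; simp
        zero_mem' := fun z => by simp; rfl
        smul_mem' := fun c x hx z => by
          rw [map_smul, LinearMap.smul_apply, hx, map_smul, smul_assoc]; simp }
    have hN : N = ⊤ := by
      apply eq_top_of_left_stable
      · intro z; simp
      · intro g x hx z
        rw [map_mul, Module.End.mul_apply, hx, map_mul, mul_smul, hF]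
        cases g with
        | vert i => exact (hfv i _ _).trans (by simp; rfl)
        | fwd e => exact (hfb _ _ _).trans (by simp; rfl)
        | bwd e => exact (hfb _ _ _).trans (by simp; rfl)
    intro x
    exact (hN ▸ Submodule.mem_top : x ∈ N)
  · rw [hFi, hfv, smul_zero]
  · rw [hFb, hfb, smul_zero, zero_add]

lemma exists_map_eq_of_sum_mul_arr_eq_zero (π : PreprojAlg k Q →ₐ[k] A)
    (z : Q.DArrow → PreprojAlg k Q)
    (hz : ∀ b, z b * ppIdem k Q (dsrc b) = z b) (h : ∑ b, z b * arr k b = 0) :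
    ∃ y : A, ∀ b, π (z b) = dsign k b.swap • (y * π (arr k b.swap)) := by
  classical
  let R : Submodule A (Q.DArrow → A) :=
    Submodule.span A {fun b => dsign k b.swap • π (arr k b.swap)}
  obtain ⟨F, hF, -, hb⟩ := exists_fox_rep π R rfl
  have h1 : ∀ b, F (z b * arr k b) (0, 1) = (R.mkQ (Pi.single b (π (z b))), 0) := by
    intro b
    rw [map_mul, Module.End.mul_apply, hb, Pi.one_apply, one_smul, hF, ← map_smul,
      ← Pi.single_smul, smul_eq_mul, ← map_mul, hz]
  have h2 := congrArg (fun x => (F x (0, 1)).1) h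
  simp only [map_sum, LinearMap.sum_apply, h1, Prod.fst_sum, map_zero, LinearMap.zero_apply,
    Prod.fst_zero] at h2
  rw [← map_sum, Finset.univ_sum_single fun b => π (z b), Submodule.mkQ_apply,
    Submodule.Quotient.mk_eq_zero, Submodule.mem_span_singleton] at h2
  obtain ⟨y, hy⟩ := h2
  refine ⟨y, fun b => ?_⟩
  have := congrFun hy b
  rw [Pi.smul_apply, smul_eq_mul, mul_smul_comm] at this
  exact this.symm

/-- The only linear relations between left multiples of arrows are the mesh relations. -/
theorem exists_of_sum_mul_arr_eq_zero (z : Q.DArrow → PreprojAlg k Q)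
    (hz : ∀ b, z b * ppIdem k Q (dsrc b) = z b) (h : ∑ b, z b * arr k b = 0) :
    ∃ y, ∀ b, z b = dsign k b.swap • (y * arr k b.swap) :=
  exists_map_eq_of_sum_mul_arr_eq_zero (AlgHom.id k _) z hz h

lemma idem_ne_zero (i : Fin Q.r) : ppIdem k Q i ≠ 0 := by
  intro h
  obtain ⟨F, -, hi, -⟩ := exists_fox_rep (AlgHom.id k (PreprojAlg k Q)) _ rfl
  have := congrFun (congrArg Prod.snd (hi i 1)) i
  rw [h, map_zero] at this
  exact zero_ne_one (α := k) (this.trans (Pi.single_eq_same _ _))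

end Exactness

section Grading

open Polynomial

lemma exists_degree_hom : ∃ F : PreprojAlg k Q →ₐ[k] (PreprojAlg k Q)[X],
    ∀ g, F (ppGen k Q g) = monomial (ppWt Q g) (ppGen k Q g) := by
  have hv : ∀ i, ppGen k Q (.vert i) = ppIdem k Q i := fun _ => rfl
  have ha : ∀ b, ppGen k Q (dgen b) = arr k b := fun _ => rfl
  have h0 : ∀ i, ppWt Q (.vert i) = 0 := fun _ => rfl
  apply exists_lift (B := (PreprojAlg k Q)[X])
  · intro i; simp only [monomial_mul_monomial, hv, h0, idem_mul_self, add_zero]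
  · intro i j h; simp only [monomial_mul_monomial, hv, h0, idem_mul_of_ne k h, map_zero]
  · simp only [h0, hv]
    rw [← map_sum, sum_idem]; rfl
  · intro b; simp only [monomial_mul_monomial, hv, ha, h0, zero_add, idem_mul_arr]
  · intro b; simp only [monomial_mul_monomial, hv, ha, h0, add_zero, arr_mul_idem]
  · intro i
    simp only [monomial_mul_monomial, ppWt_dgen, ha, smul_monomial]
    have := congrArg (monomial (1 + 1)) (mesh_eq_zero (Q := Q) k i)
    rw [map_sum, map_zero] at this
    refine Eq.trans ?_ this
    exact Finset.sum_congr rfl fun b _ => by split_ifs <;> simp only [map_zero]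

variable (k Q) in
/-- The algebra homomorphism `Π(Q) → Π(Q)[X]` recording path length. -/
noncomputable def degreeHom : PreprojAlg k Q →ₐ[k] (PreprojAlg k Q)[X] :=
  exists_degree_hom.choose

lemma degreeHom_gen (g : PPGen Q) :
    degreeHom k Q (ppGen k Q g) = monomial (ppWt Q g) (ppGen k Q g) :=
  exists_degree_hom.choose_spec g

/-- Projection of `Π(Q)` onto its component of degree `n`. -/
noncomputable def proj (n : ℕ) : PreprojAlg k Q →ₗ[k] PreprojAlg k Q where
  toFun x := (degreeHom k Q x).coeff n
  map_add' x y := by simp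
  map_smul' c x := by simp

lemma proj_apply (n : ℕ) (x : PreprojAlg k Q) : proj n x = (degreeHom k Q x).coeff n := rfl

lemma proj_gen_mul (n : ℕ) (g : PPGen Q) (x : PreprojAlg k Q) :
    proj (n + ppWt Q g) (ppGen k Q g * x) = ppGen k Q g * proj n x := by
  rw [proj_apply, map_mul, degreeHom_gen, coeff_monomial_mul, proj_apply]

lemma proj_mul_gen (n : ℕ) (g : PPGen Q) (x : PreprojAlg k Q) :
    proj (n + ppWt Q g) (x * ppGen k Q g) = proj n x * ppGen k Q g := by
  rw [proj_apply, map_mul, degreeHom_gen, coeff_mul_monomial, proj_apply]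

@[simp] lemma proj_idem_mul (n : ℕ) (i : Fin Q.r) (x : PreprojAlg k Q) :
    proj n (ppIdem k Q i * x) = ppIdem k Q i * proj n x :=
  proj_gen_mul n (.vert i) x

@[simp] lemma proj_mul_idem (n : ℕ) (i : Fin Q.r) (x : PreprojAlg k Q) :
    proj n (x * ppIdem k Q i) = proj n x * ppIdem k Q i :=
  proj_mul_gen n (.vert i) x

@[simp] lemma proj_mul_arr (n : ℕ) (b : Q.DArrow) (x : PreprojAlg k Q) :
    proj (n + 1) (x * arr k b) = proj n x * arr k b := by
  simpa [arr] using proj_mul_gen n (dgen b) x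

@[simp] lemma proj_zero_mul_arr (b : Q.DArrow) (x : PreprojAlg k Q) :
    proj 0 (x * arr k b) = 0 := by
  rw [proj_apply, map_mul, arr, degreeHom_gen, ppWt_dgen, mul_coeff_zero, coeff_monomial]
  simp

lemma proj_one (n : ℕ) : proj n (1 : PreprojAlg k Q) = if n = 0 then 1 else 0 := by
  rw [proj_apply, map_one, coeff_one]

lemma proj_idem (n : ℕ) (i : Fin Q.r) :
    proj n (ppIdem k Q i) = if n = 0 then ppIdem k Q i else 0 := by
  have := proj_idem_mul n i (1 : PreprojAlg k Q)
  rw [mul_one, proj_one] at this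
  simp [this]

lemma gen_mul_mem_piece {n : ℕ} {x : PreprojAlg k Q} (g : PPGen Q) (hx : x ∈ ppPiece k Q n) :
    ppGen k Q g * x ∈ ppPiece k Q (n + ppWt Q g) := by
  induction hx using Submodule.span_induction with
  | mem x h =>
    obtain ⟨l, hl, rfl⟩ := h
    exact Submodule.subset_span ⟨g :: l, by simp [hl, add_comm], by simp⟩
  | zero => simp
  | add x y _ _ hx hy => rw [mul_add]; exact Submodule.add_mem _ hx hy
  | smul c x _ hx => rw [mul_smul_comm]; exact Submodule.smul_mem _ _ hx

lemma proj_mem_piece (n : ℕ) (x : PreprojAlg k Q) : proj n x ∈ ppPiece k Q n := by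
  let N : Submodule k (PreprojAlg k Q) := ⨅ n, (ppPiece k Q n).comap (proj n)
  have hN : N = ⊤ := by
    apply eq_top_of_left_stable
    · refine (Submodule.mem_iInf _).2 fun n => ?_
      rw [Submodule.mem_comap, proj_one]
      split_ifs with h
      · subst h
        exact Submodule.subset_span ⟨[], by simp, by simp⟩
      · exact Submodule.zero_mem _
    · intro g x hx
      refine (Submodule.mem_iInf _).2 fun n => ?_
      rw [Submodule.mem_comap]
      by_cases h : ppWt Q g ≤ n
      · obtain ⟨m, rfl⟩ := Nat.exists_eq_add_of_le' h
        rw [proj_gen_mul]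
        exact gen_mul_mem_piece g ((Submodule.mem_iInf _).1 hx m)
      · have : proj n (ppGen k Q g * x) = 0 := by
          rw [proj_apply, map_mul, degreeHom_gen, ← C_mul_X_pow_eq_monomial, mul_assoc, coeff_C_mul,
            X_pow_mul, coeff_mul_X_pow', if_neg h, mul_zero]
        rw [this]
        exact Submodule.zero_mem _
  exact (Submodule.mem_iInf _).1 (hN ▸ Submodule.mem_top : x ∈ N) n

lemma mem_piece_iff {n : ℕ} {x : PreprojAlg k Q} : x ∈ ppPiece k Q n ↔ proj n x = x := by
  refine ⟨fun hx => ?_, fun h => h ▸ proj_mem_piece n x⟩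
  induction hx using Submodule.span_induction with
  | mem x h =>
    obtain ⟨l, hl, rfl⟩ := h
    have : ∀ l : List (PPGen Q), degreeHom k Q (l.map (ppGen k Q)).prod =
        monomial (l.map (ppWt Q)).sum (l.map (ppGen k Q)).prod := by
      intro l
      induction l with
      | nil => simp
      | cons g l ih => simp [ih, degreeHom_gen, monomial_mul_monomial]
    rw [proj_apply, this, hl, coeff_monomial_same]
  | zero => simp
  | add x y _ _ hx hy => rw [map_add, hx, hy]
  | smul c x _ hx => rw [map_smul, hx]

@[simp] lemma proj_proj (n : ℕ) (x : PreprojAlg k Q) : proj n (proj n x) = proj n x :=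
  mem_piece_iff.1 (proj_mem_piece n x)

lemma mem_corner_iff {n : ℕ} {i j : Fin Q.r} {x : PreprojAlg k Q} :
    x ∈ ppCorner k Q n i j ↔ ppIdem k Q i * x = x ∧ x * ppIdem k Q j = x ∧ proj n x = x := by
  constructor
  · rintro ⟨y, hy, rfl⟩
    have hy' := mem_piece_iff.1 hy
    simp only [LinearMap.comp_apply, LinearMap.mulLeft_apply, LinearMap.mulRight_apply]
    refine ⟨?_, ?_, ?_⟩
    · rw [← mul_assoc, idem_mul_self]
    · rw [mul_assoc, mul_assoc, idem_mul_self]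
    · rw [proj_idem_mul, proj_mul_idem, hy']
  · rintro ⟨h1, h2, h3⟩
    exact ⟨x, mem_piece_iff.2 h3, by simp [h1, h2]⟩

end Grading

section Socle

/-- A linear map with values in the range of `L` factors through `L`. -/
lemma exists_linearMap_lift {U V W : Type*} [AddCommGroup U] [AddCommGroup V] [AddCommGroup W]
    [Module k U] [Module k V] [Module k W] (L : V →ₗ[k] W) (G : U →ₗ[k] W)
    (h : ∀ x, G x ∈ LinearMap.range L) : ∃ S : U →ₗ[k] V, ∀ x, L (S x) = G x := by
  obtain ⟨g, hg⟩ := LinearMap.exists_rightInverse_of_surjective L.rangeRestrict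
    L.range_rangeRestrict
  exact ⟨g.comp (G.codRestrict _ h), fun x =>
    congrArg Subtype.val (LinearMap.congr_fun hg (G.codRestrict _ h x))⟩

variable (k) in
/-- Membership in the homogeneous component of degree `n` of the right module `e_i Π(Q)`. -/
def InRow (n : ℕ) (i : Fin Q.r) (x : PreprojAlg k Q) : Prop :=
  ppIdem k Q i * x = x ∧ proj n x = x

lemma mem_corner_iff_inRow {n : ℕ} {i j : Fin Q.r} {x : PreprojAlg k Q} :
    x ∈ ppCorner k Q n i j ↔ InRow k n i x ∧ x * ppIdem k Q j = x := by
  rw [mem_corner_iff, InRow]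
  tauto

lemma inRow_idem_mul_proj (n : ℕ) (i : Fin Q.r) (x : PreprojAlg k Q) :
    InRow k n i (ppIdem k Q i * proj n x) :=
  ⟨by rw [← mul_assoc, idem_mul_self], by rw [proj_idem_mul, proj_proj]⟩

lemma InRow.mul_idem {n : ℕ} {i : Fin Q.r} {x : PreprojAlg k Q} (hx : InRow k n i x)
    (j : Fin Q.r) : InRow k n i (x * ppIdem k Q j) :=
  ⟨by rw [← mul_assoc, hx.1], by rw [proj_mul_idem, hx.2]⟩

lemma InRow.mul_arr {n : ℕ} {i : Fin Q.r} {x : PreprojAlg k Q} (hx : InRow k n i x)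
    (b : Q.DArrow) : InRow k (n + 1) i (x * arr k b) :=
  ⟨by rw [← mul_assoc, hx.1], by rw [proj_mul_arr, hx.2]⟩

lemma InRow.sum {ι : Type*} {s : Finset ι} {n : ℕ} {i : Fin Q.r} {x : ι → PreprojAlg k Q}
    (hx : ∀ a ∈ s, InRow k n i (x a)) : InRow k n i (∑ a ∈ s, x a) :=
  ⟨by rw [Finset.mul_sum]; exact Finset.sum_congr rfl fun a ha => (hx a ha).1,
    by rw [map_sum]; exact Finset.sum_congr rfl fun a ha => (hx a ha).2⟩

lemma InRow.eq_smul_idem {i : Fin Q.r} {x : PreprojAlg k Q} (hx : InRow k 0 i x) :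
    ∃ c : k, x = c • ppIdem k Q i := by
  obtain ⟨c, z, h⟩ := exists_eq_sum x
  refine ⟨c i, ?_⟩
  rw [← hx.1, ← hx.2, h]
  simp only [map_add, map_sum, map_smul, proj_zero_mul_arr, proj_idem, if_true,
    Finset.sum_const_zero, add_zero, Finset.mul_sum, mul_smul_comm]
  rw [Finset.sum_eq_single i, idem_mul_self]
  · intro j _ hj
    rw [idem_mul_of_ne k hj.symm, smul_zero]
  · simp

lemma InRow.exists_eq_sum {n : ℕ} {i : Fin Q.r} {x : PreprojAlg k Q} (hx : InRow k (n + 1) i x) :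
    ∃ z : Q.DArrow → PreprojAlg k Q, (∀ b, InRow k n i (z b) ∧ z b * ppIdem k Q (dsrc b) = z b) ∧
      x = ∑ b, z b * arr k b := by
  obtain ⟨c, z, h⟩ := Preproj.exists_eq_sum x
  refine ⟨fun b => ppIdem k Q i * proj n (z b) * ppIdem k Q (dsrc b),
    fun b => ⟨(inRow_idem_mul_proj n i _).mul_idem _, ?_⟩, ?_⟩
  · rw [mul_assoc _ _ (ppIdem k Q (dsrc b)), idem_mul_self]
  · rw [← hx.1, ← hx.2, h]
    simp only [map_add, map_sum, map_smul, proj_mul_arr, proj_idem, Nat.succ_ne_zero, if_false,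
      smul_zero, Finset.sum_const_zero, zero_add, Finset.mul_sum]
    exact Finset.sum_congr rfl fun b _ => by rw [mul_assoc _ _ (arr k b), idem_mul_arr, mul_assoc]

/-- A graded endomorphism of the degree `m + 1` part of `e_i Π(Q)` compatible with the mesh
relations extends to degree `m`. -/
lemma exists_extend_endo (m : ℕ) (i : Fin Q.r) (T : PreprojAlg k Q →ₗ[k] PreprojAlg k Q)
    (hidem : ∀ x l, T (x * ppIdem k Q l) = T x * ppIdem k Q l)
    (hrow : ∀ x, InRow k (m + 1) i (T x))
    (hmesh : ∀ x, ∑ b, dsign k b • (T (x * arr k b) * arr k b.swap) = 0) :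
    ∃ S : PreprojAlg k Q →ₗ[k] PreprojAlg k Q,
      (∀ x l, S (x * ppIdem k Q l) = S x * ppIdem k Q l) ∧ (∀ x, InRow k m i (S x)) ∧
      ∀ x b, S x * arr k b = T (x * arr k b) := by
  let L : PreprojAlg k Q →ₗ[k] (Q.DArrow → PreprojAlg k Q) :=
    LinearMap.pi fun b => LinearMap.mulRight k (arr k b)
  let G : PreprojAlg k Q →ₗ[k] (Q.DArrow → PreprojAlg k Q) :=
    LinearMap.pi fun b => T.comp (LinearMap.mulRight k (arr k b))
  have hG : ∀ x, G x ∈ LinearMap.range L := by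
    intro x
    obtain ⟨w, hw⟩ := exists_of_sum_mul_arr_eq_zero
      (fun b => dsign k b.swap • T (x * arr k b.swap))
      (fun b => by rw [smul_mul_assoc, ← hidem, mul_assoc, ← dtgt_swap, arr_mul_idem]) (by
        rw [← hmesh x]
        exact Fintype.sum_equiv (Equiv.sumComm _ _) _ _ fun b => by simp)
    refine ⟨w, funext fun b => ?_⟩
    have := hw b.swap
    rw [Sum.swap_swap] at this
    exact (smul_right_injective _ (dsign_ne_zero k b) this).symm
  obtain ⟨S₀, hLS⟩ := exists_linearMap_lift L G hG
  have hS₀ : ∀ x b, S₀ x * arr k b = T (x * arr k b) := fun x b => congrFun (hLS x) b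
  let S : PreprojAlg k Q →ₗ[k] PreprojAlg k Q := ∑ l,
    (LinearMap.mulRight k (ppIdem k Q l)).comp ((LinearMap.mulLeft k (ppIdem k Q i)).comp
      ((proj m).comp (S₀.comp (LinearMap.mulRight k (ppIdem k Q l)))))
  have hS : ∀ x, S x = ∑ l, ppIdem k Q i * proj m (S₀ (x * ppIdem k Q l)) * ppIdem k Q l := by
    intro x
    simp [S, LinearMap.sum_apply]
  refine ⟨S, fun x l => ?_, fun x => ?_, fun x b => ?_⟩
  · rw [hS, hS, Finset.sum_mul, Finset.sum_eq_single l, Finset.sum_eq_single l]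
    · rw [mul_assoc x, idem_mul_self, mul_assoc _ (ppIdem k Q l) (ppIdem k Q l), idem_mul_self]
    · intro a _ ha
      rw [mul_assoc, idem_mul_of_ne k ha, mul_zero]
    · simp
    · intro a _ ha
      rw [mul_assoc x, idem_mul_of_ne k ha.symm, mul_zero, map_zero, map_zero, mul_zero, zero_mul]
    · simp
  · rw [hS]
    exact InRow.sum fun l _ => (inRow_idem_mul_proj m i _).mul_idem l
  · rw [hS, Finset.sum_mul, Finset.sum_eq_single (dsrc b)]
    · rw [mul_assoc _ _ (arr k b), idem_mul_arr, mul_assoc, ← proj_mul_arr, hS₀, mul_assoc x,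
        idem_mul_arr, (hrow _).2, (hrow _).1]
    · intro l _ hl
      rw [mul_assoc, idem_mul_arr_of_ne k hl.symm, mul_zero]
    · simp

/-- A graded endomorphism of `e_i Π(Q)` in degree `m` compatible with the mesh relations
is a scalar. -/
lemma endo_eq_smul (m : ℕ) (i : Fin Q.r) (T : PreprojAlg k Q →ₗ[k] PreprojAlg k Q)
    (hidem : ∀ x l, T (x * ppIdem k Q l) = T x * ppIdem k Q l)
    (hrow : ∀ x, InRow k m i (T x))
    (hmesh : ∀ x, ∑ b, dsign k b • (T (x * arr k b) * arr k b.swap) = 0) :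
    ∃ c : k, ∀ x, InRow k m i x → T x = c • x := by
  induction m generalizing T with
  | zero =>
    obtain ⟨c, hc⟩ := (hrow (ppIdem k Q i)).eq_smul_idem
    refine ⟨c, fun x hx => ?_⟩
    obtain ⟨a, rfl⟩ := hx.eq_smul_idem
    rw [map_smul, hc, smul_comm]
  | succ m ih =>
    obtain ⟨S, hS, hSrow, hST⟩ := exists_extend_endo m i T hidem hrow hmesh
    obtain ⟨c, hc⟩ := ih S hS hSrow fun x => by
      have h : ∀ b, dsign k b • (S (x * arr k b) * arr k b.swap) =
          T (x * (dsign k b • (arr k b * arr k b.swap))) := fun b => by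
        rw [hST, mul_assoc, mul_smul_comm, map_smul]
      rw [Finset.sum_congr rfl fun b _ => h b, ← map_sum, ← Finset.mul_sum, sum_mesh_eq_zero,
        mul_zero, map_zero]
    refine ⟨c, fun x hx => ?_⟩
    obtain ⟨z, hz, rfl⟩ := hx.exists_eq_sum
    rw [map_sum, Finset.smul_sum]
    exact Finset.sum_congr rfl fun b _ => by rw [← hST, hc _ (hz b).1, smul_mul_assoc]

/-- If `e_i Π(Q) e_j` has a nonzero element of degree `n` killed by all arrows, then
`e_i Π(Q)` vanishes in degree `n + 1`. -/
theorem eq_zero_of_socle_ne_zero {n : ℕ} {i j : Fin Q.r} {y : PreprojAlg k Q}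
    (hy : y ∈ ppCorner k Q n i j) (hy0 : y ≠ 0) (hsoc : ∀ b, y * arr k b = 0)
    {x : PreprojAlg k Q} (hx : InRow k (n + 1) i x) : x = 0 := by
  obtain ⟨hyrow, hyj⟩ := mem_corner_iff_inRow.1 hy
  obtain ⟨f, hf⟩ : ∃ f : Module.Dual k (PreprojAlg k Q), f y ≠ 0 := by
    by_contra! h
    exact hy0 ((Module.forall_dual_apply_eq_zero_iff k y).1 h)
  let T : PreprojAlg k Q →ₗ[k] PreprojAlg k Q :=
    (LinearMap.toSpanSingleton k _ y).comp (f.comp (LinearMap.mulRight k (ppIdem k Q j)))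
  have hT : ∀ x, T x = f (x * ppIdem k Q j) • y := fun x => rfl
  obtain ⟨c, hc⟩ := endo_eq_smul n i T
    (by
      intro x l
      rw [hT, hT, smul_mul_assoc, mul_assoc]
      by_cases h : l = j
      · subst h
        rw [idem_mul_self, hyj]
      · rw [idem_mul_of_ne k h, ← hyj, mul_assoc, idem_mul_of_ne k (Ne.symm h)]
        simp)
    (fun x => ⟨by rw [hT, mul_smul_comm, hyrow.1], by rw [hT, map_smul, hyrow.2]⟩)
    (fun x => Finset.sum_eq_zero fun b _ => by rw [hT, smul_mul_assoc, hsoc]; simp)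
  have hc0 : c ≠ 0 := by
    rintro rfl
    have := hc y hyrow
    rw [hT, hyj, zero_smul] at this
    exact (smul_ne_zero hf hy0) this
  obtain ⟨z, hz, rfl⟩ := hx.exists_eq_sum
  refine Finset.sum_eq_zero fun b _ => ?_
  have h := hc (z b) (hz b).1
  have h1 : c • (z b * arr k b) = 0 := by
    rw [← smul_mul_assoc, ← h, hT, smul_mul_assoc, hsoc, smul_zero]
  exact (smul_eq_zero.1 h1).resolve_left hc0

end Socle

section Dimension

/-- Dimension count for an exact sequence `K → ∏ W b → W' → 0` of subspaces of `V`. -/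
lemma finrank_sum_of_exact {V ι : Type*} [AddCommGroup V] [Module k V] [Fintype ι]
    (W : ι → Submodule k V) (W' K : Submodule k V) (φ ψ : ι → V →ₗ[k] V)
    (hW : ∀ b, FiniteDimensional k (W b)) [FiniteDimensional k K]
    (hW' : ∀ x, x ∈ W' ↔ ∃ z : ι → V, (∀ b, z b ∈ W b) ∧ x = ∑ b, φ b (z b))
    (hK : ∀ z : ι → V, ((∀ b, z b ∈ W b) ∧ ∑ b, φ b (z b) = 0) ↔ ∃ y ∈ K, ∀ b, z b = ψ b y) :
    FiniteDimensional k W' ∧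
    ∑ b, Module.finrank k (W b) ≤ Module.finrank k W' + Module.finrank k K ∧
    ((∀ y ∈ K, (∀ b, ψ b y = 0) → y = 0) →
      ∑ b, Module.finrank k (W b) = Module.finrank k W' + Module.finrank k K) := by
  let D : (∀ b, W b) →ₗ[k] V :=
    ∑ b, (φ b).comp ((W b).subtype.comp (LinearMap.proj b))
  have hD : ∀ z, D z = ∑ b, φ b (z b) := fun z => by simp [D, LinearMap.sum_apply]
  have hrange : LinearMap.range D = W' := by
    ext x
    rw [LinearMap.mem_range, hW']
    constructor
    · rintro ⟨z, rfl⟩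
      exact ⟨fun b => z b, fun b => (z b).2, hD z⟩
    · rintro ⟨z, hz, rfl⟩
      exact ⟨fun b => ⟨z b, hz b⟩, hD _⟩
  let E : K →ₗ[k] (∀ b, W b) := LinearMap.pi fun b =>
    ((ψ b).comp K.subtype).codRestrict (W b) fun y => ((hK _).2 ⟨y, y.2, fun _ => rfl⟩).1 b
  have hE : LinearMap.range E = LinearMap.ker D := by
    ext z
    rw [LinearMap.mem_range, LinearMap.mem_ker, hD]
    constructor
    · rintro ⟨y, rfl⟩
      exact ((hK _).2 ⟨y, y.2, fun _ => rfl⟩).2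
    · intro h
      obtain ⟨y, hy, hz⟩ := (hK fun b => z b).1 ⟨fun b => (z b).2, h⟩
      exact ⟨⟨y, hy⟩, funext fun b => Subtype.ext (hz b).symm⟩
  have hrank := LinearMap.finrank_range_add_finrank_ker D
  rw [hrange, ← hE, Module.finrank_pi_fintype] at hrank
  refine ⟨hrange ▸ inferInstance, ?_, fun hinj => ?_⟩
  · rw [← hrank]
    exact Nat.add_le_add_left (LinearMap.finrank_range_le E) _
  · rw [← hrank, LinearMap.finrank_range_of_inj]
    rw [← LinearMap.ker_eq_bot, LinearMap.ker_eq_bot']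
    exact fun y hy => Subtype.ext (hinj y y.2 fun b => congrArg Subtype.val (congrFun hy b))

lemma idem_mul_proj_mul_idem_mem (n : ℕ) (i j : Fin Q.r) (x : PreprojAlg k Q) :
    ppIdem k Q i * proj n x * ppIdem k Q j ∈ ppCorner k Q n i j :=
  mem_corner_iff_inRow.2 ⟨(inRow_idem_mul_proj n i x).mul_idem j, by rw [mul_assoc, idem_mul_self]⟩

lemma arr_mul_idem_of_eq {b : Q.DArrow} {j : Fin Q.r} (h : dtgt b = j) :
    arr k b * ppIdem k Q j = arr k b := by
  rw [← h, arr_mul_idem]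

lemma mem_corner_succ_iff {n : ℕ} {i j : Fin Q.r} (x : PreprojAlg k Q) :
    x ∈ ppCorner k Q (n + 1) i j ↔ ∃ z : {b : Q.DArrow // dtgt b = j} → PreprojAlg k Q,
      (∀ b, z b ∈ ppCorner k Q n i (dsrc b.1)) ∧
        x = ∑ b, LinearMap.mulRight k (arr k b.1) (z b) := by
  constructor
  · intro hx
    obtain ⟨hrow, hj⟩ := mem_corner_iff_inRow.1 hx
    obtain ⟨z, hz, h⟩ := hrow.exists_eq_sum
    refine ⟨fun b => z b, fun b => mem_corner_iff_inRow.2 (hz b), ?_⟩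
    rw [← hj, h, Finset.sum_mul, ← sum_dtgt_eq j _ fun b hb => by
      rw [mul_assoc, arr_mul_idem_of_ne k hb, mul_zero]]
    refine Finset.sum_congr rfl fun b _ => ?_
    rw [LinearMap.mulRight_apply, mul_assoc, arr_mul_idem_of_eq b.2]
  · rintro ⟨z, hz, rfl⟩
    refine mem_corner_iff_inRow.2 ⟨InRow.sum fun b _ => ?_, ?_⟩
    · exact (mem_corner_iff_inRow.1 (hz b)).1.mul_arr b.1
    · rw [Finset.sum_mul]
      refine Finset.sum_congr rfl fun b _ => ?_
      rw [LinearMap.mulRight_apply, mul_assoc, arr_mul_idem_of_eq b.2]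

/-- Relations between right multiples of the arrows ending at a given vertex. -/
lemma exists_of_sum_dtgt_eq_zero {n : ℕ} {i j : Fin Q.r}
    {z : {b : Q.DArrow // dtgt b = j} → PreprojAlg k Q}
    (hz : ∀ b, z b ∈ ppCorner k Q n i (dsrc b.1))
    (h : ∑ b, LinearMap.mulRight k (arr k b.1) (z b) = 0) :
    ∃ y, ∀ b, z b = dsign k b.1.swap • (y * arr k b.1.swap) := by
  classical
  let z' : Q.DArrow → PreprojAlg k Q := fun b => if hb : dtgt b = j then z ⟨b, hb⟩ else 0
  have hz' : ∀ b : {b : Q.DArrow // dtgt b = j}, z' b = z b := fun b => dif_pos b.2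
  obtain ⟨y, hy⟩ := exists_of_sum_mul_arr_eq_zero z'
    (fun b => by
      by_cases hb : dtgt b = j
      · rw [hz' ⟨b, hb⟩]
        exact (mem_corner_iff_inRow.1 (hz ⟨b, hb⟩)).2
      · simp [z', hb])
    (by
      rw [← h, ← sum_dtgt_eq j _ fun b hb => by simp [z', hb]]
      exact Finset.sum_congr rfl fun b _ => by rw [hz', LinearMap.mulRight_apply])
  exact ⟨y, fun b => by rw [← hz', hy]⟩

lemma finrank_corner_zero (i j : Fin Q.r) : FiniteDimensional k (ppCorner k Q 0 i j) ∧
    Module.finrank k (ppCorner k Q 0 i j) = if i = j then 1 else 0 := by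
  split_ifs with hij
  · subst hij
    have h : ppCorner k Q 0 i i = Submodule.span k {ppIdem k Q i} := by
      ext x
      rw [Submodule.mem_span_singleton, mem_corner_iff_inRow]
      constructor
      · rintro ⟨hx, -⟩
        obtain ⟨c, rfl⟩ := hx.eq_smul_idem
        exact ⟨c, rfl⟩
      · rintro ⟨c, rfl⟩
        refine ⟨⟨?_, ?_⟩, ?_⟩
        · rw [mul_smul_comm, idem_mul_self]
        · rw [map_smul, proj_idem, if_pos rfl]
        · rw [smul_mul_assoc, idem_mul_self]
    rw [h]
    exact ⟨inferInstance, finrank_span_singleton (idem_ne_zero i)⟩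
  · have h : ppCorner k Q 0 i j = ⊥ := by
      refine (Submodule.eq_bot_iff _).2 fun x hx => ?_
      obtain ⟨hrow, hj⟩ := mem_corner_iff_inRow.1 hx
      obtain ⟨c, rfl⟩ := hrow.eq_smul_idem
      rw [← hj, smul_mul_assoc, idem_mul_of_ne k hij, smul_zero]
    rw [h]
    exact ⟨inferInstance, finrank_bot k _⟩

lemma finrank_corner_one (i j : Fin Q.r) : FiniteDimensional k (ppCorner k Q 1 i j) ∧
    ∑ b : {b : Q.DArrow // dtgt b = j}, Module.finrank k (ppCorner k Q 0 i (dsrc b.1)) =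
      Module.finrank k (ppCorner k Q 1 i j) := by
  obtain ⟨h1, -, h2⟩ := finrank_sum_of_exact
    (fun b : {b : Q.DArrow // dtgt b = j} => ppCorner k Q 0 i (dsrc b.1))
    (ppCorner k Q 1 i j) ⊥ (fun b => LinearMap.mulRight k (arr k b.1)) (fun _ => 0)
    (fun b => (finrank_corner_zero i _).1) mem_corner_succ_iff
    (fun z => by
      constructor
      · rintro ⟨hz, h⟩
        obtain ⟨y, hy⟩ := exists_of_sum_dtgt_eq_zero hz h
        refine ⟨0, Submodule.zero_mem _, fun b => ?_⟩
        rw [← (mem_corner_iff_inRow.1 (hz b)).1.2, hy, map_smul, proj_zero_mul_arr, smul_zero,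
          LinearMap.zero_apply]
      · rintro ⟨y, -, hz⟩
        simp [hz])
  refine ⟨h1, (h2 fun y hy _ => (Submodule.mem_bot k).1 hy).trans ?_⟩
  rw [finrank_bot, add_zero]

lemma finrank_corner_add_two {n : ℕ} {i : Fin Q.r}
    (hfin : ∀ m < n + 2, ∀ j, FiniteDimensional k (ppCorner k Q m i j)) (j : Fin Q.r) :
    FiniteDimensional k (ppCorner k Q (n + 2) i j) ∧
    ∑ b : {b : Q.DArrow // dtgt b = j}, Module.finrank k (ppCorner k Q (n + 1) i (dsrc b.1)) ≤
      Module.finrank k (ppCorner k Q (n + 2) i j) + Module.finrank k (ppCorner k Q n i j) ∧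
    ((∀ y ∈ ppCorner k Q n i j, (∀ b, y * arr k b = 0) → y = 0) →
      ∑ b : {b : Q.DArrow // dtgt b = j}, Module.finrank k (ppCorner k Q (n + 1) i (dsrc b.1)) =
        Module.finrank k (ppCorner k Q (n + 2) i j) +
          Module.finrank k (ppCorner k Q n i j)) := by
  have hn : FiniteDimensional k (ppCorner k Q n i j) := hfin n (by omega) j
  obtain ⟨h1, h2, h3⟩ := finrank_sum_of_exact
    (fun b : {b : Q.DArrow // dtgt b = j} => ppCorner k Q (n + 1) i (dsrc b.1))
    (ppCorner k Q (n + 2) i j) (ppCorner k Q n i j) (fun b => LinearMap.mulRight k (arr k b.1))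
    (fun b => dsign k b.1.swap • LinearMap.mulRight k (arr k b.1.swap))
    (fun b => hfin (n + 1) (by omega) _) mem_corner_succ_iff
    (fun z => by
      constructor
      · rintro ⟨hz, h⟩
        obtain ⟨y, hy⟩ := exists_of_sum_dtgt_eq_zero hz h
        refine ⟨_, idem_mul_proj_mul_idem_mem n i j y, fun b => ?_⟩
        have hb : ppIdem k Q j * arr k b.1.swap = arr k b.1.swap := by
          have := idem_mul_arr k b.1.swap
          rwa [dsrc_swap, b.2] at this
        have hrow := (mem_corner_iff_inRow.1 (hz b)).1
        rw [← hrow.1, ← hrow.2, hy, LinearMap.smul_apply, LinearMap.mulRight_apply, map_smul,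
          proj_mul_arr, mul_assoc, hb, mul_smul_comm, mul_assoc]
      · rintro ⟨y, hy, hz⟩
        obtain ⟨hrow, hj⟩ := mem_corner_iff_inRow.1 hy
        simp only [hz, LinearMap.smul_apply, LinearMap.mulRight_apply]
        refine ⟨fun b => Submodule.smul_mem _ _ (mem_corner_iff_inRow.2 ⟨hrow.mul_arr _, ?_⟩), ?_⟩
        · rw [← dtgt_swap, mul_assoc, arr_mul_idem]
        · have h : ∀ b : Q.DArrow, dsign k b.swap • (y * arr k b.swap) * arr k b =
              y * (dsign k b.swap • (arr k b.swap * arr k b)) := fun b => by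
            rw [smul_mul_assoc, mul_smul_comm, mul_assoc]
          rw [sum_dtgt_eq j (fun b => dsign k b.swap • (y * arr k b.swap) * arr k b) fun b hb => by
            rw [← hj, mul_assoc, idem_mul_arr_of_ne k (by rwa [dsrc_swap]), mul_zero, smul_zero,
              zero_mul], Finset.sum_congr rfl fun b _ => h b, ← Finset.mul_sum,
            Fintype.sum_equiv (Equiv.sumComm _ _) _
              (fun b => dsign k b • (arr k b * arr k b.swap)) fun b => by simp,
            sum_mesh_eq_zero, mul_zero])
  refine ⟨h1, h2, fun hsoc => h3 fun y hy hker => hsoc y hy fun b => ?_⟩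
  by_cases hb : dsrc b = j
  · have := hker ⟨b.swap, by rw [dtgt_swap, hb]⟩
    simp only [LinearMap.smul_apply, LinearMap.mulRight_apply, Sum.swap_swap] at this
    exact (smul_eq_zero.1 this).resolve_left (dsign_ne_zero k b)
  · rw [← (mem_corner_iff_inRow.1 hy).2, mul_assoc, idem_mul_arr_of_ne k hb, mul_zero]

variable (k) in
theorem finiteDimensional_corner (n : ℕ) (i j : Fin Q.r) :
    FiniteDimensional k (ppCorner k Q n i j) := by
  induction n using Nat.strong_induction_on generalizing j with
  | _ n ih =>
    match n, ih with
    | 0, _ => exact (finrank_corner_zero i j).1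
    | 1, _ => exact (finrank_corner_one i j).1
    | n + 2, ih => exact (finrank_corner_add_two ih j).1

variable (k) in
/-- For a connected non-Dynkin quiver, no nonzero element of `e_i Π(Q) e_j` is killed by all
arrows. -/
theorem eq_zero_of_mul_arr_eq_zero (hconn : Q.Connected) (hnd : ¬ Q.IsDynkin) {n : ℕ}
    {i j : Fin Q.r} {y : PreprojAlg k Q} (hy : y ∈ ppCorner k Q n i j)
    (hsoc : ∀ b, y * arr k b = 0) : y = 0 := by
  by_contra hy0
  obtain ⟨v, hv, hC⟩ := exists_pos_two_mul_le i.pos hconn hnd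
  let d : ℕ → Fin Q.r → ℝ := fun m l => Module.finrank k (ppCorner k Q m i l)
  let f : ℕ → ℝ := fun m => ∑ l, d m l * v l
  have hstep : ∀ m, 2 * f m ≤ ∑ l, (∑ a, d m a * (Q.doubleAdj a l : ℝ)) * v l := by
    intro m
    have h : ∑ l, (∑ a, d m a * (Q.doubleAdj a l : ℝ)) * v l =
        ∑ a, d m a * ∑ l, (Q.doubleAdj a l : ℝ) * v l := by
      simp only [Finset.sum_mul, Finset.mul_sum, mul_assoc]
      exact Finset.sum_comm
    rw [h, Finset.mul_sum]
    refine Finset.sum_le_sum fun a _ => ?_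
    have := mul_le_mul_of_nonneg_left (hC a) (Nat.cast_nonneg (α := ℝ) _ : 0 ≤ d m a)
    linarith
  have h0 : 0 < f 0 := by
    simp only [f, d, (finrank_corner_zero i _).2]
    simpa using hv i
  have h1 : 2 * f 0 ≤ f 1 := by
    refine (hstep 0).trans (Finset.sum_le_sum fun l _ => ?_)
    rw [← sum_dsrc_eq_sum_doubleAdj]
    refine mul_le_mul_of_nonneg_right ?_ (hv l).le
    simp only [d, ← (finrank_corner_one (k := k) i l).2, Nat.cast_sum, le_refl]
  have h2 : ∀ m, 2 * f (m + 1) ≤ f (m + 2) + f m := by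
    intro m
    refine (hstep (m + 1)).trans ?_
    rw [← Finset.sum_add_distrib]
    refine Finset.sum_le_sum fun l _ => ?_
    rw [← sum_dsrc_eq_sum_doubleAdj, ← add_mul]
    refine mul_le_mul_of_nonneg_right ?_ (hv l).le
    simp only [d, ← Nat.cast_sum, ← Nat.cast_add, Nat.cast_le]
    exact (finrank_corner_add_two (n := m) (i := i)
      (fun m _ j => finiteDimensional_corner k m i j) l).2.1
  have hmono : ∀ m, 0 ≤ f m ∧ f m + f 0 ≤ f (m + 1) := by
    intro m
    induction m with
    | zero => exact ⟨h0.le, by simpa [two_mul] using h1⟩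
    | succ m ih => exact ⟨by linarith [ih.1, ih.2], by linarith [h2 m, ih.2]⟩
  have hlast : f (n + 1) = 0 := Finset.sum_eq_zero fun l _ => by
    have : ppCorner k Q (n + 1) i l = ⊥ := (Submodule.eq_bot_iff _).2 fun x hx =>
      eq_zero_of_socle_ne_zero hy hy0 hsoc (mem_corner_iff_inRow.1 hx).1
    have hd : Module.finrank k (ppCorner k Q (n + 1) i l) = 0 := by rw [this, finrank_bot]
    simp only [d, hd, Nat.cast_zero, zero_mul]
  linarith [hmono n]

end Dimension

end Preproj

/-- Coefficientwise, the identity `h_Π(t) (1 - C t + t²) = 1`. -/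
theorem ppHilb_mul_eq_one (k : Type) [Field k] {Q : FinQuiver} (hconn : Q.Connected)
    (hnd : ¬ Q.IsDynkin) :
    ppHilb k Q *
      (1 - (PowerSeries.X : PowerSeries k) • (Q.doubleAdj.map (Nat.cast : ℕ → PowerSeries k))
        + (PowerSeries.X ^ 2 : PowerSeries k) •
            (1 : Matrix (Fin Q.r) (Fin Q.r) (PowerSeries k))) = 1 := by
  ext i j n
  let d : ℕ → Fin Q.r → ℕ := fun m l => Module.finrank k (ppCorner k Q m i l)
  have hentry : (ppHilb k Q *
      (1 - (PowerSeries.X : PowerSeries k) • (Q.doubleAdj.map (Nat.cast : ℕ → PowerSeries k))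
        + (PowerSeries.X ^ 2 : PowerSeries k) •
            (1 : Matrix (Fin Q.r) (Fin Q.r) (PowerSeries k)))) i j =
      PowerSeries.mk (fun m => (d m j : k)) -
        PowerSeries.X * PowerSeries.mk (fun m => ((∑ l, d m l * Q.doubleAdj l j : ℕ) : k)) +
        PowerSeries.X * (PowerSeries.X * PowerSeries.mk (fun m => (d m j : k))) := by
    have hsum : PowerSeries.mk (fun m => ((∑ l, d m l * Q.doubleAdj l j : ℕ) : k)) =
        ∑ l, PowerSeries.mk (fun m => (d m l : k)) * (Q.doubleAdj l j : PowerSeries k) := by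
      ext m
      rw [map_sum, PowerSeries.coeff_mk, Nat.cast_sum]
      refine Finset.sum_congr rfl fun l _ => ?_
      rw [← map_natCast (PowerSeries.C (R := k)), PowerSeries.coeff_mul_C, PowerSeries.coeff_mk,
        Nat.cast_mul]
    rw [mul_add, mul_sub, mul_one, Matrix.mul_smul, Matrix.mul_smul, mul_one, Matrix.add_apply,
      Matrix.sub_apply, Matrix.smul_apply, Matrix.smul_apply, smul_eq_mul, smul_eq_mul,
      Matrix.mul_apply, hsum, pow_two, mul_assoc]
    rfl
  have hsrc : ∀ m, ∑ l, d m l * Q.doubleAdj l j =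
      ∑ b : {b : Q.DArrow // FinQuiver.dtgt b = j}, d m (FinQuiver.dsrc b.1) := fun m =>
    (FinQuiver.sum_dsrc_eq_sum_doubleAdj (d m) j).symm
  have h1 := (Preproj.finrank_corner_one (k := k) i j).2
  have h2 := fun m => (Preproj.finrank_corner_add_two (n := m) (i := i)
    (fun m _ j => Preproj.finiteDimensional_corner k m i j) j).2.2
    fun y hy => Preproj.eq_zero_of_mul_arr_eq_zero k hconn hnd hy
  rw [hentry, map_add, map_sub]
  match n with
  | 0 =>
    simp [d, (Preproj.finrank_corner_zero i j).2, Matrix.one_apply, apply_ite]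
  | 1 =>
    rw [PowerSeries.coeff_succ_X_mul, PowerSeries.coeff_succ_X_mul, PowerSeries.coeff_mk,
      PowerSeries.coeff_mk, PowerSeries.coeff_zero_X_mul, hsrc, h1]
    simp [d, Matrix.one_apply, apply_ite, PowerSeries.coeff_one]
  | m + 2 =>
    rw [PowerSeries.coeff_succ_X_mul, PowerSeries.coeff_succ_X_mul, PowerSeries.coeff_succ_X_mul,
      PowerSeries.coeff_mk, PowerSeries.coeff_mk, PowerSeries.coeff_mk, hsrc, h2]
    simp [d, Matrix.one_apply, apply_ite, PowerSeries.coeff_one]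

/-- **Hilbert series of the preprojective algebra, non-Dynkin case**
(Malkin–Ostrik–Vybornov; Etingof–Eu in arbitrary characteristic).
For a connected finite acyclic non-Dynkin quiver `Q`, each graded piece of
`Π(Q)` is finite dimensional and
`h_Π(t) · (1 - C t + t² · 1) = 1 = (1 - C t + t² · 1) · h_Π(t)`
in the ring of `r × r` matrices over `k[[t]]`, where `C` is the adjacency
matrix of the double quiver; equivalently `h_Π(t) = 1 / (1 - C t + t²)`. -/
theorem preprojective_hilbert_series_non_dynkin
    (k : Type) [Field k] (Q : FinQuiver) (hr : 0 < Q.r)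
    (hconn : Q.Connected) (hacyc : Q.Acyclic) (hnd : ¬ Q.IsDynkin) :
    (∀ (n : ℕ) (i j : Fin Q.r), FiniteDimensional k (ppCorner k Q n i j)) ∧
    ppHilb k Q *
      (1 - (PowerSeries.X : PowerSeries k) • (Q.doubleAdj.map (Nat.cast : ℕ → PowerSeries k))
        + (PowerSeries.X ^ 2 : PowerSeries k) •
            (1 : Matrix (Fin Q.r) (Fin Q.r) (PowerSeries k))) = 1 ∧
    (1 - (PowerSeries.X : PowerSeries k) • (Q.doubleAdj.map (Nat.cast : ℕ → PowerSeries k))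
        + (PowerSeries.X ^ 2 : PowerSeries k) •
            (1 : Matrix (Fin Q.r) (Fin Q.r) (PowerSeries k))) * ppHilb k Q = 1 := by
  have h := ppHilb_mul_eq_one k hconn hnd
  exact ⟨Preproj.finiteDimensional_corner k, h, mul_eq_one_comm.1 h⟩
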